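/- Let Φ be a Young function such that Φ and its conjugate Φ̃ are of class Δ₂ ∩ Δ', let {T(x)}_{x∈ℝ^N} be an N-dimensional dynamical system on Ω, and let f satisfy (H₁)–(H₄). Let ψ₀(x,ω) = Σ_i φ_i^0(x)χ_i(ω) with φ_i^0 ∈ C_c^∞(Q) and χ_i : Ω → ℝ measurable, T-invariant (for every y ∈ ℝ^N, χ_i(T(y)ω) = χ_i(ω) for μ-a.e. ω) and ∫_Ω Φ(|χ_i|) dμ < ∞; let ψ₁(x,ω) = Σ_i φ_i^1(x)w_i(ω) with φ_i^1 ∈ C_c^∞(Q) and w_i bounded measurable admitting a bounded stochastic gradient G_i; and let ψ₂(x,ω,y) = Σ_i φ_i^2(x)w_i'(ω)g_i(y) with φ_i^2 ∈ C_c^∞(Q), w_i' bounded measurable admitting a bounded stochastic gradient G_i', and g_i ∈ C^∞(ℝ^N) ℤ^N-periodic. For ε > 0 define φ_ε(x,ω) = ψ₀(x,ω) + ε ψ₁(x, T(x/ε)ω) + ε² ψ₂(x, T(x/ε)ω, x/ε²). Then for μ-a.e. ω the map x ↦ φ_ε(x,ω) is C¹ on Q, and lim_{ε→0⁺} ∫_{Q×Ω}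 f(x, T(x/ε)ω, x/ε², ∇_x φ_ε(x,ω)) dx dμ(ω) = ∫_{Q×Ω×Y} f(x, ω, y, ∇_x ψ₀(x,ω) + D_ω ψ₁(x,ω) + ∇_y ψ₂(x,ω,y)) dx dμ(ω) dy, where D_ω ψ₁(x,ω) = Σ_i φ_i^1(x) G_i(ω). -/

import Mathlib

open MeasureTheory Filter Topology ENNReal

noncomputable section

/-- Euclidean norm on `Fin N → ℝ`. -/
def enorm2 {N : ℕ} (v : Fin N → ℝ) : ℝ := Real.sqrt (∑ i, v i ^ 2)

/-- `Φ : [0,∞) → [0,∞)` is a Young function: continuous, convex, positive on `(0,∞)`,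
with `Φ(t)/t → 0` as `t → 0⁺` and `Φ(t)/t → ∞` as `t → ∞` (so `Φ(0) = 0`). -/
def IsYoung (Φ : ℝ → ℝ) : Prop :=
  ContinuousOn Φ (Set.Ici 0) ∧ ConvexOn ℝ (Set.Ici 0) Φ ∧ Φ 0 = 0 ∧
    (∀ t : ℝ, 0 < t → 0 < Φ t) ∧ (∀ t : ℝ, 0 ≤ t → 0 ≤ Φ t) ∧
    Tendsto (fun t => Φ t / t) (nhdsWithin 0 (Set.Ioi 0)) (nhds 0) ∧
    Tendsto (fun t => Φ t / t) atTop atTop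

/-- The `Δ₂`-condition (at infinity). -/
def Delta2 (Φ : ℝ → ℝ) : Prop :=
  ∃ α : ℝ, 0 < α ∧ ∃ t₀ : ℝ, 0 ≤ t₀ ∧ ∀ t : ℝ, t₀ ≤ t → Φ (2 * t) ≤ α * Φ t

/-- The `Δ'`-condition (at infinity). -/
def DeltaPrime (Φ : ℝ → ℝ) : Prop :=
  ∃ k : ℝ, 0 < k ∧ ∃ t₀ s₀ : ℝ, 0 ≤ t₀ ∧ 0 ≤ s₀ ∧
    ∀ t s : ℝ, t₀ ≤ t → s₀ ≤ s → Φ (t * s) ≤ k * Φ t * Φ s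

/-- The conjugate Young function `Φ̃(t) = sup_{s ≥ 0} (st − Φ(s))`. -/
def conjY (Φ : ℝ → ℝ) (t : ℝ) : ℝ := sSup ((fun s => s * t - Φ s) '' Set.Ici 0)

/-- The Luxemburg norm `‖u‖_{Φ,X} = inf {δ > 0 : ∫_X Φ(|u|/δ) dν ≤ 1}` (`+∞` if no such `δ`). -/
def luxNorm {X : Type*} [MeasurableSpace X] (Φ : ℝ → ℝ) (ν : Measure X) (u : X → ℝ) : ℝ≥0∞ :=
  sInf {d : ℝ≥0∞ | ∃ δ : ℝ, 0 < δ ∧ d = ENNReal.ofReal δ ∧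
    (∫⁻ x, ENNReal.ofReal (Φ (|u x| / δ)) ∂ν) ≤ 1}

/-- An `N`-dimensional dynamical system on `Ω` preserving `μ`. -/
def IsDynSys {N : ℕ} {Ω : Type*} [MeasurableSpace Ω] (μ : Measure Ω)
    (T : (Fin N → ℝ) → Ω → Ω) : Prop :=
  T 0 = id ∧ (∀ x y : Fin N → ℝ, T (x + y) = T x ∘ T y) ∧
    (∀ x : Fin N → ℝ, MeasurePreserving (T x) μ μ) ∧
    Measurable fun p : (Fin N → ℝ) × Ω => T p.1 p.2

/-- `ℤ^N`-periodicity. -/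
def ZPeriodic {N : ℕ} (g : (Fin N → ℝ) → ℝ) : Prop :=
  ∀ (y : Fin N → ℝ) (k : Fin N → ℤ), g (y + fun i => (k i : ℝ)) = g y

/-- The unit cube `Y = [0,1]^N`. -/
def Ycube (N : ℕ) : Set (Fin N → ℝ) := Set.Icc 0 1

/-- `ℳ` is countably generated modulo `μ`-null sets. -/
def CountGenModNull {Ω : Type*} [MeasurableSpace Ω] (μ : Measure Ω) : Prop :=
  ∃ S : ℕ → Set Ω, (∀ n, MeasurableSet (S n)) ∧
    ∀ A : Set Ω, MeasurableSet A →
      ∃ B : Set Ω, MeasurableSet[MeasurableSpace.generateFrom (Set.range S)] B ∧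
        μ (symmDiff A B) = 0

/-- Weak stochastic two-scale convergence of `(u k)` to `u₀` along the sequence `(ε k)`. -/
def WeakStoch2Scale {N : ℕ} {Ω : Type*} [MeasurableSpace Ω] (μ : Measure Ω)
    (T : (Fin N → ℝ) → Ω → Ω) (Q : Set (Fin N → ℝ)) (ε : ℕ → ℝ)
    (u : ℕ → (Fin N → ℝ) → Ω → ℝ) (u₀ : (Fin N → ℝ) → Ω → (Fin N → ℝ) → ℝ) : Prop :=
  ∀ φ : (Fin N → ℝ) → ℝ, ContDiff ℝ (⊤ : ℕ∞) φ → HasCompactSupport φ → tsupport φ ⊆ Q →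
    ∀ ψ : Ω → ℝ, Measurable ψ → (∃ C : ℝ, ∀ ω, |ψ ω| ≤ C) →
      ∀ g : (Fin N → ℝ) → ℝ, Continuous g → ZPeriodic g →
        Tendsto
          (fun k => ∫ x in Q, (∫ ω, u k x ω * φ x * ψ (T ((ε k)⁻¹ • x) ω) *
              g (((ε k) ^ 2)⁻¹ • x) ∂μ))
          atTop
          (nhds (∫ x in Q, (∫ ω, (∫ y in Ycube N, u₀ x ω y * φ x * ψ ω * g y) ∂μ)))

/-- A bounded measurable `w : Ω → ℝ` admits the bounded stochastic gradient `G`. -/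
def HasBddStochGrad {N : ℕ} {Ω : Type*} [MeasurableSpace Ω] (μ : Measure Ω)
    (T : (Fin N → ℝ) → Ω → Ω) (w : Ω → ℝ) (G : Ω → Fin N → ℝ) : Prop :=
  Measurable w ∧ (∃ C : ℝ, ∀ ω, |w ω| ≤ C) ∧ Measurable G ∧
    (∃ C : ℝ, ∀ ω, enorm2 (G ω) ≤ C) ∧
    ∀ᵐ ω ∂μ, ContDiff ℝ 1 (fun y => w (T y ω)) ∧
      ∀ (y : Fin N → ℝ) (i : Fin N),
        fderiv ℝ (fun z => w (T z ω)) y (Pi.single i 1) = G (T y ω) i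

lemma Ycube_ae {N : ℕ} : ZSpan.fundamentalDomain (Pi.basisFun ℝ (Fin N)) =ᵐ[volume] Ycube N := by
  rw [ZSpan.fundamentalDomain_pi_basisFun]
  exact Measure.univ_pi_Ico_ae_eq_Icc (f := fun _ => (0:ℝ)) (g := fun _ => (1:ℝ))

lemma Ycube_vol {N : ℕ} : volume.real (Ycube N) = 1 := by
  simp [Measure.real, Ycube]

lemma Ycube_compact {N : ℕ} : IsCompact (Ycube N) := isCompact_Icc

lemma Ycube_norm {N : ℕ} {s : Fin N → ℝ} (hs : s ∈ Ycube N) : ‖s‖ ≤ 1 := by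
  rw [pi_norm_le_iff_of_nonneg zero_le_one]
  intro i
  rw [Real.norm_eq_abs, abs_le]
  have h1 := hs.1 i
  have h2 := hs.2 i
  simp at h1 h2
  constructor <;> linarith

open scoped Pointwise in
lemma per_int {N : ℕ} (G : (Fin N → ℝ) → ℝ) (hG : ZPeriodic G) (c : Fin N → ℝ) :
    ∫ s in Ycube N, G (c + s) = ∫ s in Ycube N, G s := by
  classical
  rw [← setIntegral_congr_set Ycube_ae, ← setIntegral_congr_set Ycube_ae]
  have hD := ZSpan.isAddFundamentalDomain (Pi.basisFun ℝ (Fin N)) volume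
  have hD2 : IsAddFundamentalDomain (Submodule.span ℤ (Set.range (Pi.basisFun ℝ (Fin N))))
      (c +ᵥ ZSpan.fundamentalDomain (Pi.basisFun ℝ (Fin N))) volume := hD.vadd_of_comm c
  have hinv : ∀ (g : Submodule.span ℤ (Set.range (Pi.basisFun ℝ (Fin N)))) (x : Fin N → ℝ),
      G (g +ᵥ x) = G x := by
    intro g x
    have hk := (Pi.basisFun ℝ (Fin N)).mem_span_iff_repr_mem ℤ (g : Fin N → ℝ)
    have hk' := hk.1 g.2
    choose k hk using hk'
    have : (g : Fin N → ℝ) = fun i => (k i : ℝ) := by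
      ext i
      have := hk i
      simp at this
      exact this.symm
    have e : g +ᵥ x = x + fun i => (k i : ℝ) := by
      rw [← this, add_comm]; rfl
    rw [e]
    exact hG x k
  have : VAddInvariantMeasure (Submodule.span ℤ (Set.range (Pi.basisFun ℝ (Fin N))))
      (Fin N → ℝ) volume :=
    ⟨fun g s _ => measure_preimage_add volume (g : Fin N → ℝ) s⟩
  rw [hD.setIntegral_eq hD2 hinv]
  have hmp : MeasurePreserving (fun s : Fin N → ℝ => c + s) volume volume :=
    measurePreserving_add_left volume c
  have := hmp.setIntegral_image_emb (measurableEmbedding_addLeft c) G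
    (ZSpan.fundamentalDomain (Pi.basisFun ℝ (Fin N)))
  rw [← this]
  rfl

lemma per_reduce {N : ℕ} (y : Fin N → ℝ) : ∃ z ∈ Ycube N, ∃ k : Fin N → ℤ,
    y = z + fun i => (k i : ℝ) := by
  refine ⟨fun i => Int.fract (y i), ⟨fun i => Int.fract_nonneg _, fun i => (Int.fract_lt_one _).le⟩,
    fun i => ⌊y i⌋, ?_⟩
  ext i
  simp

lemma unif_per {N : ℕ} (F : ℝ → (Fin N → ℝ) → (Fin N → ℝ) → ℝ)
    (hF : Continuous fun p : ℝ × (Fin N → ℝ) × (Fin N → ℝ) => F p.1 p.2.1 p.2.2)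
    (hper : ∀ e x, ZPeriodic (F e x)) (x : Fin N → ℝ) (η : ℝ) (hη : 0 < η) :
    ∀ᶠ p : ℝ × (Fin N → ℝ) in 𝓝 (0, 0), ∀ y, |F p.1 (x + p.2) y - F 0 x y| < η := by
  have h : ∀ᶠ p : ℝ × (Fin N → ℝ) in 𝓝 (0, 0), ∀ y ∈ Ycube N,
      |F p.1 (x + p.2) y - F 0 x y| < η := by
    apply Ycube_compact.eventually_forall_of_forall_eventually
    intro y _
    have hc : Continuous fun q : (ℝ × (Fin N → ℝ)) × (Fin N → ℝ) =>
        |F q.1.1 (x + q.1.2) q.2 - F 0 x q.2| := by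
      have h1 : Continuous fun q : (ℝ × (Fin N → ℝ)) × (Fin N → ℝ) => F q.1.1 (x + q.1.2) q.2 :=
        hF.comp (f := fun q : (ℝ × (Fin N → ℝ)) × (Fin N → ℝ) => (q.1.1, x + q.1.2, q.2))
          (by fun_prop)
      have h2 : Continuous fun q : (ℝ × (Fin N → ℝ)) × (Fin N → ℝ) => F 0 x q.2 :=
        hF.comp (f := fun q : (ℝ × (Fin N → ℝ)) × (Fin N → ℝ) => ((0:ℝ), x, q.2))
          (by fun_prop)
      exact (h1.sub h2).abs
    have := hc.continuousAt (x := ((0, 0), y))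
    refine this.eventually_lt continuousAt_const ?_
    simpa using hη
  filter_upwards [h] with p hp y
  obtain ⟨z, hz, k, rfl⟩ := per_reduce y
  rw [hper, hper]
  exact hp z hz

lemma mean_compact {N : ℕ} (F : ℝ → (Fin N → ℝ) → (Fin N → ℝ) → ℝ)
    (hF : Continuous fun p : ℝ × (Fin N → ℝ) × (Fin N → ℝ) => F p.1 p.2.1 p.2.2)
    (hper : ∀ e x, ZPeriodic (F e x)) (M : ℝ) (hM : ∀ e x y, |F e x y| ≤ M)
    (K : Set (Fin N → ℝ)) (hK : IsCompact K) (hFK : ∀ e x y, x ∉ K → F e x y = 0) :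
    Tendsto (fun ε : ℝ => ∫ x, F ε x ((ε ^ 2)⁻¹ • x)) (𝓝[>] 0)
      (𝓝 (∫ x, ∫ y in Ycube N, F 0 x y)) := by
  have hM0 : 0 ≤ M := (abs_nonneg _).trans (hM 0 0 0)
  have hcont : ∀ ε : ℝ, Continuous (Function.uncurry fun (x s : Fin N → ℝ) =>
      F ε (x + ε ^ 2 • s) ((ε ^ 2)⁻¹ • x + s)) := fun ε =>
    hF.comp (f := fun q : (Fin N → ℝ) × (Fin N → ℝ) =>
      (ε, q.1 + ε ^ 2 • q.2, (ε ^ 2)⁻¹ • q.1 + q.2)) (by fun_prop)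
  have hK1 : IsCompact (Metric.cthickening 1 K) := hK.cthickening
  have hzero : ∀ ε : ℝ, 0 < ε → ε < 1 → ∀ x ∉ Metric.cthickening 1 K, ∀ s ∈ Ycube N,
      F ε (x + ε ^ 2 • s) ((ε ^ 2)⁻¹ • x + s) = 0 := by
    intro ε h0 h1 x hx s hs
    apply hFK
    intro hmem
    apply hx
    apply Metric.mem_cthickening_of_dist_le x (x + ε ^ 2 • s) 1 K hmem
    rw [dist_self_add_right, norm_smul, norm_pow, Real.norm_of_nonneg h0.le]
    have := Ycube_norm hs
    have h2 : ε ^ 2 ≤ 1 := pow_le_one₀ h0.le h1.le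
    nlinarith [norm_nonneg s]
  have key : ∀ ε : ℝ, 0 < ε → ε < 1 → ∫ x, F ε x ((ε ^ 2)⁻¹ • x) =
      ∫ x, ∫ s in Ycube N, F ε (x + ε ^ 2 • s) ((ε ^ 2)⁻¹ • x + s) := by
    intro ε h0 h1
    have hint : Integrable (Function.uncurry fun (x s : Fin N → ℝ) =>
        F ε (x + ε ^ 2 • s) ((ε ^ 2)⁻¹ • x + s))
        ((volume : Measure (Fin N → ℝ)).prod (volume.restrict (Ycube N))) := by
      have e : (volume : Measure (Fin N → ℝ)).prod (volume.restrict (Ycube N)) =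
          ((volume : Measure (Fin N → ℝ)).prod volume).restrict (Set.univ ×ˢ Ycube N) := by
        rw [← Measure.prod_restrict, Measure.restrict_univ]
      rw [e]
      have h3 : IntegrableOn (Function.uncurry fun (x s : Fin N → ℝ) =>
        F ε (x + ε ^ 2 • s) ((ε ^ 2)⁻¹ • x + s)) (Metric.cthickening 1 K ×ˢ Ycube N)
          ((volume : Measure (Fin N → ℝ)).prod volume) :=
        (hcont ε).continuousOn.integrableOn_compact (hK1.prod Ycube_compact)
      refine IntegrableOn.of_forall_sdiff_eq_zero h3
        (MeasurableSet.univ.prod Ycube_compact.measurableSet) ?_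
      rintro ⟨x, s⟩ ⟨⟨_, hs⟩, hn⟩
      refine hzero ε h0 h1 x ?_ s hs
      intro hx
      exact hn ⟨hx, hs⟩
    rw [integral_integral_swap hint]
    have : ∀ s : Fin N → ℝ, ∫ x, F ε (x + ε ^ 2 • s) ((ε ^ 2)⁻¹ • x + s) =
        ∫ x, F ε x ((ε ^ 2)⁻¹ • x) := by
      intro s
      rw [← integral_add_right_eq_self (fun x => F ε x ((ε ^ 2)⁻¹ • x)) (ε ^ 2 • s)]
      congr 1
      ext x
      rw [smul_add, smul_smul, inv_mul_cancel₀ (by positivity), one_smul]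
    simp only [this]
    rw [setIntegral_const, Ycube_vol, one_smul]
  have hev : ∀ᶠ ε : ℝ in 𝓝[>] 0, 0 < ε ∧ ε < 1 := by
    filter_upwards [Ioo_mem_nhdsGT (zero_lt_one : (0:ℝ) < 1)] with ε h using h
  refine Tendsto.congr' (f₁ := fun ε : ℝ => ∫ x, ∫ s in Ycube N,
    F ε (x + ε ^ 2 • s) ((ε ^ 2)⁻¹ • x + s)) ?_ ?_
  · filter_upwards [hev] with ε h using (key ε h.1 h.2).symm
  refine tendsto_integral_filter_of_dominated_convergence
    ((Metric.cthickening 1 K).indicator fun _ => M) ?_ ?_ ?_ ?_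
  · refine Eventually.of_forall fun ε => ?_
    exact (continuous_parametric_integral_of_continuous (hcont ε) Ycube_compact).aestronglyMeasurable
  · filter_upwards [hev] with ε h
    refine Eventually.of_forall fun x => ?_
    by_cases hx : x ∈ Metric.cthickening 1 K
    · rw [Set.indicator_of_mem hx]
      have := norm_setIntegral_le_of_norm_le_const (μ := volume) (s := Ycube N) (C := M)
        (f := fun s => F ε (x + ε ^ 2 • s) ((ε ^ 2)⁻¹ • x + s))
        Ycube_compact.measure_lt_top (fun s _ => hM _ _ _)
      rwa [Ycube_vol, mul_one] at this
    · rw [Set.indicator_of_notMem hx, setIntegral_eq_zero_of_forall_eq_zero, norm_zero]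
      exact fun s hs => hzero ε h.1 h.2 x hx s hs
  · rw [integrable_indicator_iff hK1.measurableSet]
    exact integrableOn_const hK1.measure_lt_top.ne
  · refine Eventually.of_forall fun x => ?_
    rw [Metric.tendsto_nhds]
    intro η hη
    have hu := unif_per F hF hper x (η/2) (by positivity)
    rw [Metric.eventually_nhds_iff] at hu
    obtain ⟨r, hr, hu⟩ := hu
    filter_upwards [hev, Ioo_mem_nhdsGT hr] with ε h h'
    rw [← per_int _ (hper 0 x) ((ε ^ 2)⁻¹ • x), dist_eq_norm, ← integral_sub]
    · have := norm_setIntegral_le_of_norm_le_const (μ := volume) (s := Ycube N) (C := η/2)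
        (f := fun s => F ε (x + ε ^ 2 • s) ((ε ^ 2)⁻¹ • x + s) - F 0 x ((ε ^ 2)⁻¹ • x + s))
        Ycube_compact.measure_lt_top (fun s hs => by
          refine (hu (y := (ε, ε ^ 2 • s)) ?_ _).le
          rw [Prod.dist_eq, max_lt_iff]
          constructor
          · simp [abs_of_pos h.1, h'.2]
          · simp only [dist_zero_right, norm_smul, norm_pow, Real.norm_of_nonneg h.1.le]
            have h1 := Ycube_norm hs
            have h2 : ε ^ 2 ≤ ε := by nlinarith [h.1, h.2]
            have h3 := h'.2
            have h4 : ε ^ 2 * ‖s‖ ≤ ε ^ 2 * 1 := by gcongr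
            linarith)
      rw [Ycube_vol, mul_one] at this
      linarith
    · refine ContinuousOn.integrableOn_compact Ycube_compact (Continuous.continuousOn ?_)
      exact (hcont ε).comp (f := fun s => (x, s)) (by fun_prop)
    · refine ContinuousOn.integrableOn_compact Ycube_compact (Continuous.continuousOn ?_)
      exact hF.comp (f := fun s => ((0:ℝ), x, (ε ^ 2)⁻¹ • x + s)) (by fun_prop)

lemma cut_est {N : ℕ} (Q : Set (Fin N → ℝ)) (hQ : MeasurableSet Q) (hQv : volume Q < ⊤)
    (φ u : (Fin N → ℝ) → ℝ) (hφ : Integrable φ) (hu : Continuous u) (M : ℝ)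
    (hM : ∀ x, |u x| ≤ M) :
    |(∫ x in Q, u x) - ∫ x, φ x * u x| ≤ M * ∫ x, ‖Q.indicator (fun _ => (1:ℝ)) x - φ x‖ := by
  have hi : Integrable (Q.indicator (fun _ => (1:ℝ))) :=
    (integrable_indicator_iff hQ).2 (integrableOn_const hQv.ne)
  have hmul : ∀ ψ : (Fin N → ℝ) → ℝ, Integrable ψ → Integrable fun x => ψ x * u x := by
    intro ψ hψ
    exact hψ.mul_bdd (c := M) hu.aestronglyMeasurable (Eventually.of_forall hM)
  have e : ∫ x in Q, u x = ∫ x, Q.indicator (fun _ => (1:ℝ)) x * u x := by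
    rw [← integral_indicator hQ]
    congr 1
    ext x
    by_cases h : x ∈ Q <;> simp [h]
  rw [e, ← integral_sub (hmul _ hi) (hmul _ hφ), ← integral_const_mul, ← Real.norm_eq_abs]
  refine norm_integral_le_of_norm_le ((hi.sub hφ).norm.const_mul M) ?_
  refine Eventually.of_forall fun x => ?_
  rw [← sub_mul, norm_mul, mul_comm]
  exact mul_le_mul_of_nonneg_right (hM x) (norm_nonneg _)

lemma mean_Q {N : ℕ} (F : ℝ → (Fin N → ℝ) → (Fin N → ℝ) → ℝ)
    (hF : Continuous fun p : ℝ × (Fin N → ℝ) × (Fin N → ℝ) => F p.1 p.2.1 p.2.2)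
    (hper : ∀ e x, ZPeriodic (F e x)) (M : ℝ) (hM : ∀ e x y, |F e x y| ≤ M)
    (Q : Set (Fin N → ℝ)) (hQ : MeasurableSet Q) (hQv : volume Q < ⊤) :
    Tendsto (fun ε : ℝ => ∫ x in Q, F ε x ((ε ^ 2)⁻¹ • x)) (𝓝[>] 0)
      (𝓝 (∫ x in Q, ∫ y in Ycube N, F 0 x y)) := by
  have hM0 : 0 ≤ M := (abs_nonneg _).trans (hM 0 0 0)
  have hi : Integrable (Q.indicator (fun _ => (1:ℝ))) :=
    (integrable_indicator_iff hQ).2 (integrableOn_const hQv.ne)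
  rw [Metric.tendsto_nhds]
  intro η hη
  obtain ⟨φ, hφs, hφη, hφc, hφi⟩ := hi.exists_hasCompactSupport_integral_sub_le
    (ε := η / (3 * (M + 1))) (by positivity)
  obtain ⟨B, hB⟩ := hφs.exists_bound_of_continuous hφc
  have hB0 : 0 ≤ B := (norm_nonneg _).trans (hB 0)
  have hmc := mean_compact (fun e x y => φ x * F e x y)
    ((hφc.comp (continuous_fst.comp continuous_snd)).mul hF)
    (fun e x y k => by simp only [hper e x y k]) (B * M)
    (fun e x y => by
      rw [abs_mul]
      exact mul_le_mul (hB x) (hM _ _ _) (abs_nonneg _) hB0)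
    (tsupport φ) hφs (fun e x y hx => by rw [image_eq_zero_of_notMem_tsupport hx, zero_mul])
  simp only [integral_const_mul] at hmc
  rw [Metric.tendsto_nhds] at hmc
  have hest : M * ∫ x, ‖Q.indicator (fun _ => (1:ℝ)) x - φ x‖ < η / 3 := by
    calc M * ∫ x, ‖Q.indicator (fun _ => (1:ℝ)) x - φ x‖ ≤ M * (η / (3 * (M + 1))) := by gcongr
      _ < (M + 1) * (η / (3 * (M + 1))) := by
        apply mul_lt_mul_of_pos_right (by linarith) (by positivity)
      _ = η / 3 := by field_simp
  filter_upwards [hmc (η / 3) (by positivity)] with ε h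
  have h1 := cut_est Q hQ hQv φ (fun x => F ε x ((ε ^ 2)⁻¹ • x)) hφi
    (hF.comp (f := fun x => (ε, x, (ε ^ 2)⁻¹ • x)) (by fun_prop)) M (fun x => hM _ _ _)
  have h2 := cut_est Q hQ hQv φ (fun x => ∫ y in Ycube N, F 0 x y) hφi
    (continuous_parametric_integral_of_continuous (f := fun x y => F 0 x y)
      (hF.comp (f := fun q : (Fin N → ℝ) × (Fin N → ℝ) => ((0:ℝ), q.1, q.2)) (by fun_prop))
      Ycube_compact) M (fun x => by
      have := norm_setIntegral_le_of_norm_le_const (μ := volume) (s := Ycube N) (C := M)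
        (f := fun s => F 0 x s) Ycube_compact.measure_lt_top (fun s _ => hM _ _ _)
      rwa [Ycube_vol, mul_one] at this)
  rw [Real.dist_eq] at h ⊢
  rw [abs_lt] at h ⊢
  have h1' := abs_le.1 (h1.trans hest.le)
  have h2' := abs_le.1 (h2.trans hest.le)
  constructor <;> linarith [h.1, h.2, h1'.1, h1'.2, h2'.1, h2'.2]

lemma young_mono {Φ : ℝ → ℝ} (hΦ : IsYoung Φ) {s t : ℝ} (hs : 0 ≤ s) (hst : s ≤ t) :
    Φ s ≤ Φ t := by
  obtain ⟨-, hc, h0, -, hn, -, -⟩ := hΦ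
  rcases hs.eq_or_lt with rfl | hs'
  · rw [h0]; exact hn t hst
  have ht : 0 < t := hs'.trans_le hst
  have := hc.2 (Set.mem_Ici.2 le_rfl) (Set.mem_Ici.2 ht.le)
    (show (0:ℝ) ≤ 1 - s / t by rw [sub_nonneg, div_le_one ht]; exact hst)
    (show 0 ≤ s / t by positivity) (by ring)
  simp only [smul_eq_mul, mul_zero, zero_add, h0] at this
  rw [div_mul_cancel₀ _ ht.ne'] at this
  refine this.trans ?_
  exact mul_le_of_le_one_left (hn t ht.le) ((div_le_one ht).2 hst)

lemma young_scale {Φ : ℝ → ℝ} (hΦ : IsYoung Φ) (h2 : Delta2 Φ) (C : ℝ) (hC : 0 ≤ C) :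
    ∃ A B : ℝ, 0 ≤ A ∧ 0 ≤ B ∧ ∀ t, 0 ≤ t → Φ (C * t) ≤ A * Φ t + B := by
  have hn := hΦ.2.2.2.2.1
  obtain ⟨α, hα, t₀, ht₀, h⟩ := h2
  have step : ∀ u, 0 ≤ u → Φ (2 * u) ≤ α * Φ u + Φ (2 * t₀) := by
    intro u hu
    rcases le_total t₀ u with h' | h'
    · have := h u h'
      linarith [hn (2 * t₀) (by positivity)]
    · have := young_mono hΦ (s := 2 * u) (t := 2 * t₀) (by positivity) (by linarith)
      have := mul_nonneg hα.le (hn u hu)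
      linarith
  have ind : ∀ n : ℕ, ∃ A B : ℝ, 0 ≤ A ∧ 0 ≤ B ∧ ∀ t, 0 ≤ t → Φ (2 ^ n * t) ≤ A * Φ t + B := by
    intro n
    induction n with
    | zero => exact ⟨1, 0, by norm_num, by norm_num, fun t _ => by simp⟩
    | succ n ih =>
      obtain ⟨A, B, hA, hB, hAB⟩ := ih
      refine ⟨α * A, α * B + Φ (2 * t₀), by positivity,
        add_nonneg (by positivity) (hn _ (by positivity)), fun t ht => ?_⟩
      have h1 := step (2 ^ n * t) (by positivity)
      have h2 := mul_le_mul_of_nonneg_left (hAB t ht) hα.le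
      rw [pow_succ, mul_comm (2 ^ n) 2, mul_assoc]
      linarith
  obtain ⟨n, hn2⟩ := pow_unbounded_of_one_lt C (one_lt_two : (1:ℝ) < 2)
  obtain ⟨A, B, hA, hB, hAB⟩ := ind n
  refine ⟨A, B, hA, hB, fun t ht => (young_mono hΦ (by positivity) ?_).trans (hAB t ht)⟩
  gcongr

lemma young_int {Ω : Type*} [MeasurableSpace Ω] (μ : Measure Ω) [IsProbabilityMeasure μ]
    {Φ : ℝ → ℝ} (hΦ : IsYoung Φ) (h2 : Delta2 Φ) {m : ℕ} (χ : Fin m → Ω → ℝ)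
    (hχmeas : ∀ i, Measurable (χ i))
    (hχint : ∀ i, (∫⁻ ω, ENNReal.ofReal (Φ |χ i ω|) ∂μ) < ⊤) (C : ℝ) (hC : 0 ≤ C) :
    Integrable (fun ω => Φ (C * (1 + ∑ i, |χ i ω|))) μ := by
  have hn := hΦ.2.2.2.2.1
  have hmeasΦ : ∀ u : Ω → ℝ, Measurable u → (∀ ω, 0 ≤ u ω) → Measurable fun ω => Φ (u ω) := by
    intro u hu hu0
    have hc : Continuous fun t : ℝ => Φ (max t 0) :=
      hΦ.1.comp_continuous (by fun_prop) (fun t => Set.mem_Ici.2 (le_max_right _ _))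
    have := hc.measurable.comp hu
    have e : (fun ω => Φ (u ω)) = (fun t : ℝ => Φ (max t 0)) ∘ u := by
      ext ω
      simp [max_eq_left (hu0 ω)]
    rwa [e]
  have hi : ∀ i, Integrable (fun ω => Φ |χ i ω|) μ := by
    intro i
    refine ⟨(hmeasΦ _ (hχmeas i).abs (fun _ => abs_nonneg _)).aestronglyMeasurable, ?_⟩
    rw [hasFiniteIntegral_iff_ofReal (Eventually.of_forall fun ω => hn _ (abs_nonneg _))]
    exact hχint i
  obtain ⟨A, B, hA, hB, hAB⟩ := young_scale hΦ h2 (C * (m + 1)) (by positivity)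
  have hb : Integrable (fun ω => A * (Φ 1 + ∑ i, Φ |χ i ω|) + B) μ := by
    refine Integrable.add (Integrable.const_mul (Integrable.add (integrable_const _) ?_) _)
      (integrable_const _)
    exact integrable_finsetSum _ fun i _ => hi i
  refine hb.mono' (hmeasΦ _ ?_ ?_).aestronglyMeasurable (Eventually.of_forall fun ω => ?_)
  · exact measurable_const.mul (measurable_const.add
      (Finset.measurable_fun_sum _ fun i _ => (hχmeas i).abs))
  · intro ω
    have : 0 ≤ ∑ i, |χ i ω| := Finset.sum_nonneg fun i _ => abs_nonneg _
    positivity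
  have hs0 : 0 ≤ ∑ i, |χ i ω| := Finset.sum_nonneg fun i _ => abs_nonneg _
  have hsΦ : ∀ i, 0 ≤ Φ |χ i ω| := fun i => hn _ (abs_nonneg _)
  have hsΦ0 : 0 ≤ ∑ i, Φ |χ i ω| := Finset.sum_nonneg fun i _ => hsΦ i
  rw [Real.norm_of_nonneg (hn _ (by positivity))]
  obtain ⟨t, ht0, hle, hΦt⟩ : ∃ t : ℝ, 0 ≤ t ∧ (1 + ∑ i, |χ i ω|) ≤ (m + 1) * t ∧
      Φ t ≤ Φ 1 + ∑ i, Φ |χ i ω| := by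
    by_cases hall : ∀ i, |χ i ω| ≤ 1
    · refine ⟨1, zero_le_one, ?_, by linarith⟩
      have : ∑ i, |χ i ω| ≤ ∑ i : Fin m, (1:ℝ) := Finset.sum_le_sum fun i _ => hall i
      simp at this
      linarith
    · push Not at hall
      obtain ⟨i₀, hi₀⟩ := hall
      obtain ⟨j, -, hj⟩ := Finset.exists_max_image Finset.univ (fun i => |χ i ω|) ⟨i₀, Finset.mem_univ _⟩
      have hj1 : 1 ≤ |χ j ω| := hi₀.le.trans (hj i₀ (Finset.mem_univ _))
      refine ⟨|χ j ω|, abs_nonneg _, ?_, ?_⟩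
      · have : ∑ i, |χ i ω| ≤ ∑ i : Fin m, |χ j ω| := Finset.sum_le_sum fun i hi => hj i hi
        simp at this
        linarith
      · have := Finset.single_le_sum (f := fun i => Φ |χ i ω|) (fun i _ => hsΦ i) (Finset.mem_univ j)
        have h1 := hn 1 zero_le_one
        linarith
  calc Φ (C * (1 + ∑ i, |χ i ω|)) ≤ Φ (C * (m + 1) * t) := by
        apply young_mono hΦ (by positivity)
        rw [mul_assoc]
        gcongr
    _ ≤ A * Φ t + B := hAB t ht0
    _ ≤ _ := by gcongr

lemma enorm2_le {N : ℕ} (v : Fin N → ℝ) (C : ℝ) (h : ∀ j, |v j| ≤ C) : enorm2 v ≤ N * C := by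
  have h1 : ∑ i, |v i| ≤ N * C := by
    have : ∑ i, |v i| ≤ ∑ i : Fin N, C := Finset.sum_le_sum fun i _ => h i
    simpa using this
  refine le_trans ?_ h1
  unfold enorm2
  have h0 : 0 ≤ ∑ i, |v i| := Finset.sum_nonneg fun i _ => abs_nonneg _
  rw [Real.sqrt_le_left h0]
  have := Finset.sum_sq_le_sq_sum_of_nonneg (s := Finset.univ) (f := fun i => |v i|)
    (fun i _ => abs_nonneg _)
  simpa using this

lemma enorm2_ge {N : ℕ} (v : Fin N → ℝ) (j : Fin N) : |v j| ≤ enorm2 v := by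
  unfold enorm2
  rw [← Real.sqrt_sq_eq_abs]
  apply Real.sqrt_le_sqrt
  exact Finset.single_le_sum (f := fun i => v i ^ 2) (fun i _ => sq_nonneg _) (Finset.mem_univ j)

lemma energy {N : ℕ} {Ω : Type*} [MeasurableSpace Ω] (μ : Measure Ω)
    [IsProbabilityMeasure μ]
    (Φ : ℝ → ℝ) (hΦ : IsYoung Φ)
    (Q : Set (Fin N → ℝ)) (hQ : MeasurableSet Q) (hQv : volume Q < ⊤)
    (f : (Fin N → ℝ) → Ω → (Fin N → ℝ) → (Fin N → ℝ) → ℝ)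
    (hfmeas : ∀ x lam : Fin N → ℝ, Measurable fun p : Ω × (Fin N → ℝ) => f x p.1 p.2 lam)
    (hfcont : ∀ᵐ ω ∂μ, Continuous fun q : (Fin N → ℝ) × (Fin N → ℝ) × (Fin N → ℝ) =>
      f q.1 ω q.2.1 q.2.2)
    (c₁ c₂ : ℝ) (hc₁ : 0 < c₁) (hc₂ : 0 < c₂)
    (hH3 : ∀ᵐ p ∂(μ.prod (volume : Measure (Fin N → ℝ))), ∀ x lam : Fin N → ℝ,
      c₁ * Φ (enorm2 lam) ≤ f x p.1 p.2 lam ∧ f x p.1 p.2 lam ≤ c₂ * (1 + Φ (enorm2 lam)))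
    (hH4 : ∀ᵐ ω ∂μ, ∀ (x y lam : Fin N → ℝ) (k : Fin N → ℤ),
      f x ω (y + fun i => (k i : ℝ)) lam = f x ω y lam)
    (Lm : ℝ → (Fin N → ℝ) → Ω → (Fin N → ℝ) → (Fin N → ℝ))
    (hLc : ∀ ω, Continuous fun p : ℝ × (Fin N → ℝ) × (Fin N → ℝ) => Lm p.1 p.2.1 ω p.2.2)
    (hLm : ∀ e x, Measurable fun p : Ω × (Fin N → ℝ) => Lm e x p.1 p.2)
    (hLp : ∀ e x ω y (k : Fin N → ℤ), Lm e x ω (y + fun i => (k i : ℝ)) = Lm e x ω y)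
    (S : Ω → ℝ) (hS : Integrable (fun ω => Φ (S ω)) μ)
    (hLS : ∀ e x ω y, enorm2 (Lm e x ω y) ≤ S ω) :
    (∀ e x y, AEStronglyMeasurable (fun ω => f x ω y (Lm e x ω y)) μ) ∧
    Tendsto (fun ε : ℝ => ∫ x in Q, ∫ ω, f x ω ((ε ^ 2)⁻¹ • x) (Lm ε x ω ((ε ^ 2)⁻¹ • x)) ∂μ)
      (𝓝[>] 0) (𝓝 (∫ x in Q, ∫ ω, (∫ y in Ycube N, f x ω y (Lm 0 x ω y)) ∂μ)) := by
  -- bounds for all `y`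
  have hbd : ∀ᵐ ω ∂μ, ∀ x y lam : Fin N → ℝ,
      c₁ * Φ (enorm2 lam) ≤ f x ω y lam ∧ f x ω y lam ≤ c₂ * (1 + Φ (enorm2 lam)) := by
    filter_upwards [Measure.ae_ae_of_ae_prod hH3, hfcont] with ω h hc x y lam
    have hcy : Continuous fun y => f x ω y lam :=
      hc.comp (f := fun y => (x, y, lam)) (by fun_prop)
    have hcl : IsClosed {y | c₁ * Φ (enorm2 lam) ≤ f x ω y lam ∧
        f x ω y lam ≤ c₂ * (1 + Φ (enorm2 lam))} :=
      (isClosed_le continuous_const hcy).inter (isClosed_le hcy continuous_const)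
    have : y ∈ closure {y | c₁ * Φ (enorm2 lam) ≤ f x ω y lam ∧
        f x ω y lam ≤ c₂ * (1 + Φ (enorm2 lam))} :=
      Measure.dense_of_ae (h.mono fun z hz => hz x lam) y
    rwa [hcl.closure_eq] at this
  have hnn : ∀ v : Fin N → ℝ, 0 ≤ enorm2 v := fun v => Real.sqrt_nonneg _
  have hdom : ∀ᵐ ω ∂μ, ∀ e x y, ‖f x ω y (Lm e x ω y)‖ ≤ c₂ * (1 + Φ (S ω)) := by
    filter_upwards [hbd] with ω h e x y
    obtain ⟨h1, h2⟩ := h x y (Lm e x ω y)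
    have h0 : 0 ≤ c₁ * Φ (enorm2 (Lm e x ω y)) :=
      mul_nonneg hc₁.le (hΦ.2.2.2.2.1 _ (hnn _))
    rw [Real.norm_of_nonneg (h0.trans h1)]
    refine h2.trans ?_
    have := young_mono hΦ (hnn _) (hLS e x ω y)
    gcongr
  have hdomint : Integrable (fun ω => c₂ * (1 + Φ (S ω))) μ :=
    ((integrable_const (1:ℝ)).add hS).const_mul c₂
  -- measurable modification
  obtain ⟨A, hAsub, hAm, hA0⟩ := exists_measurable_superset_of_null (ae_iff.1 hfcont)
  have hAc : ∀ ω ∉ A, Continuous fun q : (Fin N → ℝ) × (Fin N → ℝ) × (Fin N → ℝ) =>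
      f q.1 ω q.2.1 q.2.2 := by
    intro ω hω
    by_contra hcon
    exact hω (hAsub hcon)
  have hAae : ∀ᵐ ω ∂μ, ω ∉ A := measure_eq_zero_iff_ae_notMem.1 hA0
  have hum := measurable_uncurry_of_continuous_of_measurable
    (u := fun (q : (Fin N → ℝ) × (Fin N → ℝ) × (Fin N → ℝ)) (ω : Ω) =>
      Aᶜ.indicator (fun ω => f q.1 ω q.2.1 q.2.2) ω)
    (by
      intro ω
      by_cases h : ω ∈ A
      · simp [h, continuous_const]
      · simpa [h] using hAc ω h)
    (by
      intro q
      refine Measurable.indicator ?_ hAm.compl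
      exact (hfmeas q.1 q.2.2).comp (measurable_id.prodMk measurable_const))
  have hmeas2 : ∀ e x, AEStronglyMeasurable
      (Function.uncurry fun (y : Fin N → ℝ) (ω : Ω) => f x ω y (Lm e x ω y))
      ((volume.restrict (Ycube N)).prod μ) := by
    intro e x
    have hm : Measurable fun p : (Fin N → ℝ) × Ω =>
        Aᶜ.indicator (fun ω => f x ω p.1 (Lm e x p.2 p.1)) p.2 :=
      hum.comp (f := fun p : (Fin N → ℝ) × Ω => ((x, p.1, Lm e x p.2 p.1), p.2))
        ((measurable_const.prodMk (measurable_fst.prodMk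
          ((hLm e x).comp (measurable_snd.prodMk measurable_fst)))).prodMk measurable_snd)
    refine hm.aestronglyMeasurable.congr ?_
    filter_upwards [Measure.quasiMeasurePreserving_snd.ae hAae] with p hp
    simp [hp, Function.uncurry]
  have hmeas1 : ∀ e x y, AEStronglyMeasurable (fun ω => f x ω y (Lm e x ω y)) μ := by
    intro e x y
    have hm : Measurable fun ω : Ω =>
        Aᶜ.indicator (fun ω' => f x ω' y (Lm e x ω y)) ω :=
      hum.comp (f := fun ω : Ω => ((x, y, Lm e x ω y), ω))
        ((measurable_const.prodMk (measurable_const.prodMk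
          ((hLm e x).comp (measurable_id.prodMk measurable_const)))).prodMk measurable_id)
    refine hm.aestronglyMeasurable.congr ?_
    filter_upwards [hAae] with ω hp
    simp [hp]
  refine ⟨hmeas1, ?_⟩
  have hHc : Continuous fun p : ℝ × (Fin N → ℝ) × (Fin N → ℝ) =>
      ∫ ω, f p.2.1 ω p.2.2 (Lm p.1 p.2.1 ω p.2.2) ∂μ := by
    refine continuous_of_dominated (bound := fun ω => c₂ * (1 + Φ (S ω)))
      (fun p => hmeas1 _ _ _) (fun p => ?_) hdomint ?_
    · filter_upwards [hdom] with ω h using h _ _ _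
    · filter_upwards [hfcont] with ω h
      exact h.comp (f := fun p : ℝ × (Fin N → ℝ) × (Fin N → ℝ) =>
        (p.2.1, p.2.2, Lm p.1 p.2.1 ω p.2.2))
        ((continuous_fst.comp continuous_snd).prodMk
          ((continuous_snd.comp continuous_snd).prodMk (hLc ω)))
  have hmain := mean_Q (fun e x y => ∫ ω, f x ω y (Lm e x ω y) ∂μ) hHc
    (by
      intro e x y k
      refine integral_congr_ae ?_
      filter_upwards [hH4] with ω h
      simp only [hLp, h])
    (∫ ω, c₂ * (1 + Φ (S ω)) ∂μ)
    (by
      intro e x y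
      rw [← Real.norm_eq_abs]
      refine norm_integral_le_of_norm_le hdomint ?_
      filter_upwards [hdom] with ω h using h _ _ _) Q hQ hQv
  have hswap : ∀ x, ∫ y in Ycube N, ∫ ω, f x ω y (Lm 0 x ω y) ∂μ =
      ∫ ω, (∫ y in Ycube N, f x ω y (Lm 0 x ω y)) ∂μ := by
    intro x
    have : IsFiniteMeasure ((volume : Measure (Fin N → ℝ)).restrict (Ycube N)) :=
      ⟨by rw [Measure.restrict_apply_univ]; exact Ycube_compact.measure_lt_top⟩
    refine integral_integral_swap ?_
    refine Integrable.mono' (g := fun p : (Fin N → ℝ) × Ω => c₂ * (1 + Φ (S p.2)))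
      (hdomint.comp_snd _) (hmeas2 0 x) ?_
    filter_upwards [Measure.quasiMeasurePreserving_snd.ae hdom] with p hp using hp _ _ _
  simp only [hswap] at hmain
  exact hmain

def Bdd' {α : Type*} (u : α → ℝ) : Prop := ∃ C, ∀ a, |u a| ≤ C

lemma Bdd'.add {α : Type*} {u v : α → ℝ} (hu : Bdd' u) (hv : Bdd' v) :
    Bdd' fun a => u a + v a := by
  obtain ⟨C, hC⟩ := hu
  obtain ⟨D, hD⟩ := hv
  exact ⟨C + D, fun a => (abs_add_le _ _).trans (add_le_add (hC a) (hD a))⟩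

lemma Bdd'.mul {α : Type*} {u v : α → ℝ} (hu : Bdd' u) (hv : Bdd' v) :
    Bdd' fun a => u a * v a := by
  obtain ⟨C, hC⟩ := hu
  obtain ⟨D, hD⟩ := hv
  refine ⟨C * D, fun a => ?_⟩
  rw [abs_mul]
  exact mul_le_mul (hC a) (hD a) (abs_nonneg _) ((abs_nonneg _).trans (hC a))

lemma Bdd'.sum {α : Type*} {m : ℕ} {u : Fin m → α → ℝ} (hu : ∀ i, Bdd' (u i)) :
    Bdd' fun a => ∑ i, u i a := by
  choose C hC using hu
  exact ⟨∑ i, C i, fun a => (Finset.abs_sum_le_sum_abs _ _).trans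
    (Finset.sum_le_sum fun i _ => hC i a)⟩

lemma Bdd'.comp {α β : Type*} {u : α → ℝ} (hu : Bdd' u) (g : β → α) : Bdd' fun b => u (g b) := by
  obtain ⟨C, hC⟩ := hu
  exact ⟨C, fun b => hC _⟩

lemma bdd_all {α : Type*} {m N : ℕ} {u : Fin m → Fin N → α → ℝ} (hu : ∀ i j, Bdd' (u i j)) :
    ∃ C, 0 ≤ C ∧ ∀ i j a, |u i j a| ≤ C := by
  choose C hC using hu
  refine ⟨∑ i, ∑ j, |C i j|, Finset.sum_nonneg fun i _ => Finset.sum_nonneg fun j _ => abs_nonneg _,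
    fun i j a => ?_⟩
  calc |u i j a| ≤ |C i j| := (hC i j a).trans (le_abs_self _)
    _ ≤ ∑ j, |C i j| := Finset.single_le_sum (f := fun j => |C i j|) (fun _ _ => abs_nonneg _)
        (Finset.mem_univ j)
    _ ≤ _ := Finset.single_le_sum (f := fun i => ∑ j, |C i j|)
        (fun _ _ => Finset.sum_nonneg fun j _ => abs_nonneg _) (Finset.mem_univ i)

lemma bdd_cs {N : ℕ} {u : (Fin N → ℝ) → ℝ} (hu : Continuous u) (hs : HasCompactSupport u) :
    Bdd' u := by
  obtain ⟨C, hC⟩ := hs.exists_bound_of_continuous hu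
  exact ⟨C, hC⟩

lemma bdd_per {N : ℕ} {u : (Fin N → ℝ) → ℝ} (hu : Continuous u) (hp : ZPeriodic u) :
    Bdd' u := by
  obtain ⟨C, hC⟩ := Ycube_compact.exists_bound_of_continuousOn hu.continuousOn
  refine ⟨C, fun y => ?_⟩
  obtain ⟨z, hz, k, rfl⟩ := per_reduce y
  rw [hp]
  exact hC z hz

lemma pd_cont {N : ℕ} {u : (Fin N → ℝ) → ℝ} (hu : ContDiff ℝ (⊤ : ℕ∞) u) (j : Fin N) :
    Continuous fun x => fderiv ℝ u x (Pi.single j 1) :=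
  (hu.continuous_fderiv (by simp)).clm_apply continuous_const

lemma pd_cs {N : ℕ} {u : (Fin N → ℝ) → ℝ} (hu : HasCompactSupport u) (j : Fin N) :
    HasCompactSupport fun x => fderiv ℝ u x (Pi.single j 1) :=
  hu.fderiv_apply ℝ _

lemma pd_per {N : ℕ} {u : (Fin N → ℝ) → ℝ} (hu : ZPeriodic u) (j : Fin N) :
    ZPeriodic fun x => fderiv ℝ u x (Pi.single j 1) := by
  intro y k
  have : (fun x => u (x + fun i => (k i : ℝ))) = u := funext fun x => hu x k
  show fderiv ℝ u (y + fun i => (k i : ℝ)) _ = fderiv ℝ u y _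
  rw [← fderiv_comp_add_right, this]

def clp (e : ℝ) : ℝ := max 0 (min e 1)

/-- The limiting gradient field with its `ε`-corrections. -/
def Lfun {N : ℕ} {Ω : Type*} {m₀ m₁ m₂ : ℕ}
    (φ0 : Fin m₀ → (Fin N → ℝ) → ℝ) (χ : Fin m₀ → Ω → ℝ)
    (φ1 : Fin m₁ → (Fin N → ℝ) → ℝ) (w1 : Fin m₁ → Ω → ℝ) (G1 : Fin m₁ → Ω → Fin N → ℝ)
    (φ2 : Fin m₂ → (Fin N → ℝ) → ℝ) (w2 : Fin m₂ → Ω → ℝ) (G2 : Fin m₂ → Ω → Fin N → ℝ)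
    (g2 : Fin m₂ → (Fin N → ℝ) → ℝ)
    (e : ℝ) (x : Fin N → ℝ) (ω : Ω) (y : Fin N → ℝ) (j : Fin N) : ℝ :=
  (∑ i, fderiv ℝ (φ0 i) x (Pi.single j 1) * χ i ω) +
  ((∑ i, φ1 i x * G1 i ω j) +
  (∑ i, φ2 i x * w2 i ω * fderiv ℝ (g2 i) y (Pi.single j 1)) +
  clp e * ((∑ i, fderiv ℝ (φ1 i) x (Pi.single j 1) * w1 i ω) +
    (∑ i, φ2 i x * G2 i ω j * g2 i y) +
    clp e * (∑ i, fderiv ℝ (φ2 i) x (Pi.single j 1) * w2 i ω * g2 i y)))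

lemma clp_cont : Continuous clp := by unfold clp; fun_prop

lemma clp_bdd : Bdd' clp := by
  refine ⟨1, fun e => ?_⟩
  unfold clp
  rw [abs_of_nonneg (le_max_left _ _)]
  exact max_le zero_le_one (min_le_right _ _)

lemma grad_w {N : ℕ} {Ω : Type*} (T : (Fin N → ℝ) → Ω → Ω) (w : Ω → ℝ) (ω : Ω) (ε : ℝ)
    (h : ContDiff ℝ 1 (fun y => w (T y ω))) (x : Fin N → ℝ) :
    HasFDerivAt (fun z => w (T (ε⁻¹ • z) ω))
      (ε⁻¹ • fderiv ℝ (fun z => w (T z ω)) (ε⁻¹ • x)) x := by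
  have hd : DifferentiableAt ℝ (fun y => w (T y ω)) (ε⁻¹ • x) :=
    (h.differentiable (by simp)).differentiableAt
  have h2 : HasFDerivAt (fun z : Fin N → ℝ => ε⁻¹ • z) (ε⁻¹ • ContinuousLinearMap.id ℝ (Fin N → ℝ)) x :=
    (hasFDerivAt_id x).const_smul ε⁻¹
  have := hd.hasFDerivAt.comp x h2
  refine this.congr_fderiv ?_
  ext v
  simp

lemma grad_phi {N : ℕ} {Ω : Type*} (T : (Fin N → ℝ) → Ω → Ω) {m₀ m₁ m₂ : ℕ}
    (φ0 : Fin m₀ → (Fin N → ℝ) → ℝ) (χ : Fin m₀ → Ω → ℝ)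
    (φ1 : Fin m₁ → (Fin N → ℝ) → ℝ) (w1 : Fin m₁ → Ω → ℝ) (G1 : Fin m₁ → Ω → Fin N → ℝ)
    (φ2 : Fin m₂ → (Fin N → ℝ) → ℝ) (w2 : Fin m₂ → Ω → ℝ) (G2 : Fin m₂ → Ω → Fin N → ℝ)
    (g2 : Fin m₂ → (Fin N → ℝ) → ℝ)
    (h0 : ∀ i, Differentiable ℝ (φ0 i)) (h1 : ∀ i, Differentiable ℝ (φ1 i))
    (h2 : ∀ i, Differentiable ℝ (φ2 i)) (hg : ∀ i, Differentiable ℝ (g2 i))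
    (ω : Ω)
    (hw1 : ∀ i, ContDiff ℝ 1 (fun y => w1 i (T y ω)) ∧ ∀ (y : Fin N → ℝ) (j : Fin N),
        fderiv ℝ (fun z => w1 i (T z ω)) y (Pi.single j 1) = G1 i (T y ω) j)
    (hw2 : ∀ i, ContDiff ℝ 1 (fun y => w2 i (T y ω)) ∧ ∀ (y : Fin N → ℝ) (j : Fin N),
        fderiv ℝ (fun z => w2 i (T z ω)) y (Pi.single j 1) = G2 i (T y ω) j)
    (ε : ℝ) (hε : 0 < ε) (hε1 : ε < 1) (x : Fin N → ℝ)
    (hχ : ∀ i, χ i (T (ε⁻¹ • x) ω) = χ i ω) :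
    (fun j => fderiv ℝ
              (fun z : Fin N → ℝ =>
                (∑ i, φ0 i z * χ i ω) + ε * (∑ i, φ1 i z * w1 i (T (ε⁻¹ • z) ω)) +
                  ε ^ 2 * (∑ i, φ2 i z * w2 i (T (ε⁻¹ • z) ω) * g2 i ((ε ^ 2)⁻¹ • z)))
              x (Pi.single j 1)) =
    Lfun φ0 χ φ1 w1 G1 φ2 w2 G2 g2 ε x (T (ε⁻¹ • x) ω) ((ε ^ 2)⁻¹ • x) := by
  have hclp : clp ε = ε := by
    unfold clp
    rw [min_eq_left hε1.le, max_eq_right hε.le]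
  have hgd : ∀ i, HasFDerivAt (fun z => g2 i ((ε ^ 2)⁻¹ • z))
      ((ε ^ 2)⁻¹ • fderiv ℝ (g2 i) ((ε ^ 2)⁻¹ • x)) x := by
    intro i
    have h2 : HasFDerivAt (fun z : Fin N → ℝ => (ε ^ 2)⁻¹ • z)
      ((ε ^ 2)⁻¹ • ContinuousLinearMap.id ℝ (Fin N → ℝ)) x :=
      (hasFDerivAt_id x).const_smul (ε ^ 2)⁻¹
    have := (hg i ((ε ^ 2)⁻¹ • x)).hasFDerivAt.comp x h2
    refine this.congr_fderiv ?_
    ext v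
    simp
  have hA := HasFDerivAt.fun_sum (u := Finset.univ)
    fun i _ => (h0 i x).hasFDerivAt.mul_const (χ i ω)
  have hB := (HasFDerivAt.fun_sum (u := Finset.univ)
    fun i _ => (h1 i x).hasFDerivAt.mul (grad_w T (w1 i) ω ε (hw1 i).1 x)).const_mul ε
  have hC := (HasFDerivAt.fun_sum (u := Finset.univ)
    fun i _ => ((h2 i x).hasFDerivAt.mul (grad_w T (w2 i) ω ε (hw2 i).1 x)).mul (hgd i)).const_mul
      (ε ^ 2)
  have hABC := ((hA.add hB).add hC).fderiv
  ext j
  have e2 : fderiv ℝ (fun z : Fin N → ℝ =>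
                (∑ i, φ0 i z * χ i ω) + ε * (∑ i, φ1 i z * w1 i (T (ε⁻¹ • z) ω)) +
                  ε ^ 2 * (∑ i, φ2 i z * w2 i (T (ε⁻¹ • z) ω) * g2 i ((ε ^ 2)⁻¹ • z))) x = _ := hABC
  rw [e2]
  have hεne := hε.ne'
  simp only [Lfun, hclp, hχ, Pi.mul_apply, add_apply, sum_apply,
    smul_apply, smul_eq_mul, (hw1 _).2, (hw2 _).2]
  have eq3 : ∀ a b c d e' f' : ℝ, a + (b + ε * c) + (d + ε * e' + ε * (ε * f')) =
    a + (b + d + ε * (c + e' + ε * f')) := by intros; ring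
  rw [← eq3]
  congr 1
  · congr 1
    · exact Finset.sum_congr rfl fun i _ => mul_comm _ _
    · rw [Finset.mul_sum, Finset.mul_sum, ← Finset.sum_add_distrib]
      refine Finset.sum_congr rfl fun i _ => ?_
      field_simp
  · simp only [Finset.mul_sum, ← Finset.sum_add_distrib]
    refine Finset.sum_congr rfl fun i _ => ?_
    field_simp
    ring

/-- convergence of energies along admissible corrector test functions. -/
theorem stmt7 {N : ℕ} (hN : 1 ≤ N) {Ω : Type*} [MeasurableSpace Ω] (μ : Measure Ω)
    [IsProbabilityMeasure μ]
    (Φ : ℝ → ℝ) (hΦ : IsYoung Φ) (hΦ2 : Delta2 Φ) (hΦ2' : DeltaPrime Φ)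
    (hΦc2 : Delta2 (conjY Φ)) (hΦc2' : DeltaPrime (conjY Φ))
    (T : (Fin N → ℝ) → Ω → Ω) (hT : IsDynSys μ T)
    (Q : Set (Fin N → ℝ)) (hQo : IsOpen Q) (hQb : Bornology.IsBounded Q)
    (f : (Fin N → ℝ) → Ω → (Fin N → ℝ) → (Fin N → ℝ) → ℝ)
    (hfmeas : ∀ x lam : Fin N → ℝ, Measurable fun p : Ω × (Fin N → ℝ) => f x p.1 p.2 lam)
    (hfcont : ∀ᵐ ω ∂μ, Continuous fun q : (Fin N → ℝ) × (Fin N → ℝ) × (Fin N → ℝ) =>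
      f q.1 ω q.2.1 q.2.2)
    (hH1 : ∃ ϖ : ℝ → ℝ, Continuous ϖ ∧ ϖ 0 = 0 ∧ (∀ t, 0 ≤ ϖ t) ∧
      ∃ a : (Fin N → ℝ) → ℝ, LocallyIntegrable a volume ∧
        ∀ᵐ p ∂(μ.prod (volume : Measure (Fin N → ℝ))), ∀ x x' lam : Fin N → ℝ,
          |f x p.1 p.2 lam - f x' p.1 p.2 lam| ≤ ϖ (enorm2 (x - x')) * (a p.2 + f x p.1 p.2 lam))
    (hH2 : ∀ᵐ p ∂(μ.prod (volume : Measure (Fin N → ℝ))), ∀ x : Fin N → ℝ,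
      StrictConvexOn ℝ Set.univ (f x p.1 p.2))
    (c₁ c₂ : ℝ) (hc₁ : 0 < c₁) (hc₂ : 0 < c₂)
    (hH3 : ∀ᵐ p ∂(μ.prod (volume : Measure (Fin N → ℝ))), ∀ x lam : Fin N → ℝ,
      c₁ * Φ (enorm2 lam) ≤ f x p.1 p.2 lam ∧ f x p.1 p.2 lam ≤ c₂ * (1 + Φ (enorm2 lam)))
    (hH4 : ∀ᵐ ω ∂μ, ∀ (x y lam : Fin N → ℝ) (k : Fin N → ℤ),
      f x ω (y + fun i => (k i : ℝ)) lam = f x ω y lam)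
    (m₀ m₁ m₂ : ℕ)
    (φ0 : Fin m₀ → (Fin N → ℝ) → ℝ) (χ : Fin m₀ → Ω → ℝ)
    (hφ0 : ∀ i, ContDiff ℝ (⊤ : ℕ∞) (φ0 i) ∧ HasCompactSupport (φ0 i) ∧ tsupport (φ0 i) ⊆ Q)
    (hχmeas : ∀ i, Measurable (χ i))
    (hχinv : ∀ i (y : Fin N → ℝ), ∀ᵐ ω ∂μ, χ i (T y ω) = χ i ω)
    (hχint : ∀ i, (∫⁻ ω, ENNReal.ofReal (Φ |χ i ω|) ∂μ) < ⊤)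
    (φ1 : Fin m₁ → (Fin N → ℝ) → ℝ) (w1 : Fin m₁ → Ω → ℝ) (G1 : Fin m₁ → Ω → Fin N → ℝ)
    (hφ1 : ∀ i, ContDiff ℝ (⊤ : ℕ∞) (φ1 i) ∧ HasCompactSupport (φ1 i) ∧ tsupport (φ1 i) ⊆ Q)
    (hw1 : ∀ i, HasBddStochGrad μ T (w1 i) (G1 i))
    (φ2 : Fin m₂ → (Fin N → ℝ) → ℝ) (w2 : Fin m₂ → Ω → ℝ) (G2 : Fin m₂ → Ω → Fin N → ℝ)
    (g2 : Fin m₂ → (Fin N → ℝ) → ℝ)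
    (hφ2 : ∀ i, ContDiff ℝ (⊤ : ℕ∞) (φ2 i) ∧ HasCompactSupport (φ2 i) ∧ tsupport (φ2 i) ⊆ Q)
    (hw2 : ∀ i, HasBddStochGrad μ T (w2 i) (G2 i))
    (hg2 : ∀ i, ContDiff ℝ (⊤ : ℕ∞) (g2 i) ∧ ZPeriodic (g2 i)) :
    (∀ ε : ℝ, 0 < ε → ∀ᵐ ω ∂μ,
      ContDiffOn ℝ 1
        (fun z : Fin N → ℝ =>
          (∑ i, φ0 i z * χ i ω) + ε * (∑ i, φ1 i z * w1 i (T (ε⁻¹ • z) ω)) +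
            ε ^ 2 * (∑ i, φ2 i z * w2 i (T (ε⁻¹ • z) ω) * g2 i ((ε ^ 2)⁻¹ • z))) Q) ∧
      Tendsto
        (fun ε : ℝ => ∫ x in Q, (∫ ω,
          f x (T (ε⁻¹ • x) ω) ((ε ^ 2)⁻¹ • x)
            (fun j => fderiv ℝ
              (fun z : Fin N → ℝ =>
                (∑ i, φ0 i z * χ i ω) + ε * (∑ i, φ1 i z * w1 i (T (ε⁻¹ • z) ω)) +
                  ε ^ 2 * (∑ i, φ2 i z * w2 i (T (ε⁻¹ • z) ω) * g2 i ((ε ^ 2)⁻¹ • z)))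
              x (Pi.single j 1)) ∂μ))
        (nhdsWithin 0 (Set.Ioi 0))
        (nhds (∫ x in Q, (∫ ω, (∫ y in Ycube N,
          f x ω y
            (fun j => (∑ i, fderiv ℝ (φ0 i) x (Pi.single j 1) * χ i ω) +
              (∑ i, φ1 i x * G1 i ω j) +
              (∑ i, φ2 i x * w2 i ω * fderiv ℝ (g2 i) y (Pi.single j 1)))) ∂μ))) := by
  have hgrad : ∀ᵐ ω ∂μ,
      (∀ i, ContDiff ℝ 1 (fun y => w1 i (T y ω)) ∧ ∀ (y : Fin N → ℝ) (j : Fin N),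
        fderiv ℝ (fun z => w1 i (T z ω)) y (Pi.single j 1) = G1 i (T y ω) j) ∧
      (∀ i, ContDiff ℝ 1 (fun y => w2 i (T y ω)) ∧ ∀ (y : Fin N → ℝ) (j : Fin N),
        fderiv ℝ (fun z => w2 i (T z ω)) y (Pi.single j 1) = G2 i (T y ω) j) := by
    have a1 := ae_all_iff.2 fun i => (hw1 i).2.2.2.2
    have a2 := ae_all_iff.2 fun i => (hw2 i).2.2.2.2
    filter_upwards [a1, a2] with ω b1 b2 using ⟨b1, b2⟩
  refine ⟨?_, ?_⟩
  · intro ε hε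
    filter_upwards [hgrad] with ω hω
    apply ContDiff.contDiffOn
    have s1 : ∀ i, ContDiff ℝ 1 (φ0 i) := fun i => (hφ0 i).1.of_le (by simp)
    have s2 : ∀ i, ContDiff ℝ 1 (φ1 i) := fun i => (hφ1 i).1.of_le (by simp)
    have s3 : ∀ i, ContDiff ℝ 1 (φ2 i) := fun i => (hφ2 i).1.of_le (by simp)
    have s4 : ∀ i, ContDiff ℝ 1 (g2 i) := fun i => (hg2 i).1.of_le (by simp)
    have s5 : ∀ i, ContDiff ℝ 1 (fun z => w1 i (T (ε⁻¹ • z) ω)) := fun i =>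
      (hω.1 i).1.comp (contDiff_id.const_smul ε⁻¹)
    have s6 : ∀ i, ContDiff ℝ 1 (fun z => w2 i (T (ε⁻¹ • z) ω)) := fun i =>
      (hω.2 i).1.comp (contDiff_id.const_smul ε⁻¹)
    have s7 : ∀ i, ContDiff ℝ 1 (fun z => g2 i ((ε ^ 2)⁻¹ • z)) := fun i =>
      (s4 i).comp (contDiff_id.const_smul (ε ^ 2)⁻¹)
    refine ContDiff.add (ContDiff.add ?_ (contDiff_const.mul ?_)) (contDiff_const.mul ?_)
    · exact ContDiff.sum fun i _ => (s1 i).mul contDiff_const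
    · exact ContDiff.sum fun i _ => (s2 i).mul (s5 i)
    · exact ContDiff.sum fun i _ => ((s3 i).mul (s6 i)).mul (s7 i)
  have c0' := fun i j => pd_cont (hφ0 i).1 j
  have c1' := fun i j => pd_cont (hφ1 i).1 j
  have c2' := fun i j => pd_cont (hφ2 i).1 j
  have cg' := fun i j => pd_cont (hg2 i).1 j
  have c1 := fun i => (hφ1 i).1.continuous
  have c2 := fun i => (hφ2 i).1.continuous
  have cg := fun i => (hg2 i).1.continuous
  have hR : ∀ j : Fin N, Bdd' fun a : ℝ × (Fin N → ℝ) × Ω × (Fin N → ℝ) =>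
      ((∑ i, φ1 i a.2.1 * G1 i a.2.2.1 j) +
      (∑ i, φ2 i a.2.1 * w2 i a.2.2.1 * fderiv ℝ (g2 i) a.2.2.2 (Pi.single j 1)) +
      clp a.1 * ((∑ i, fderiv ℝ (φ1 i) a.2.1 (Pi.single j 1) * w1 i a.2.2.1) +
      (∑ i, φ2 i a.2.1 * G2 i a.2.2.1 j * g2 i a.2.2.2) +
      clp a.1 * (∑ i, fderiv ℝ (φ2 i) a.2.1 (Pi.single j 1) * w2 i a.2.2.1 * g2 i a.2.2.2))) := by
    intro j
    have d1 := fun i => (bdd_cs (c1 i) (hφ1 i).2.1).comp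
      (fun a : ℝ × (Fin N → ℝ) × Ω × (Fin N → ℝ) => a.2.1)
    have d2 := fun i => (bdd_cs (c2 i) (hφ2 i).2.1).comp
      (fun a : ℝ × (Fin N → ℝ) × Ω × (Fin N → ℝ) => a.2.1)
    have d1' := fun i => (bdd_cs (c1' i j) (pd_cs (hφ1 i).2.1 j)).comp
      (fun a : ℝ × (Fin N → ℝ) × Ω × (Fin N → ℝ) => a.2.1)
    have d2' := fun i => (bdd_cs (c2' i j) (pd_cs (hφ2 i).2.1 j)).comp
      (fun a : ℝ × (Fin N → ℝ) × Ω × (Fin N → ℝ) => a.2.1)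
    have dg := fun i => (bdd_per (cg i) (hg2 i).2).comp
      (fun a : ℝ × (Fin N → ℝ) × Ω × (Fin N → ℝ) => a.2.2.2)
    have dg' := fun i => (bdd_per (cg' i j) (pd_per (hg2 i).2 j)).comp
      (fun a : ℝ × (Fin N → ℝ) × Ω × (Fin N → ℝ) => a.2.2.2)
    have dw1 := fun i => (show Bdd' (w1 i) from (hw1 i).2.1).comp
      (fun a : ℝ × (Fin N → ℝ) × Ω × (Fin N → ℝ) => a.2.2.1)
    have dw2 := fun i => (show Bdd' (w2 i) from (hw2 i).2.1).comp
      (fun a : ℝ × (Fin N → ℝ) × Ω × (Fin N → ℝ) => a.2.2.1)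
    have dG1 := fun i => (show Bdd' (fun ω => G1 i ω j) from
      ⟨_, fun ω => (enorm2_ge _ j).trans ((hw1 i).2.2.2.1.choose_spec ω)⟩).comp
      (fun a : ℝ × (Fin N → ℝ) × Ω × (Fin N → ℝ) => a.2.2.1)
    have dG2 := fun i => (show Bdd' (fun ω => G2 i ω j) from
      ⟨_, fun ω => (enorm2_ge _ j).trans ((hw2 i).2.2.2.1.choose_spec ω)⟩).comp
      (fun a : ℝ × (Fin N → ℝ) × Ω × (Fin N → ℝ) => a.2.2.1)
    have dc := clp_bdd.comp (fun a : ℝ × (Fin N → ℝ) × Ω × (Fin N → ℝ) => a.1)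
    exact ((Bdd'.sum fun i => (d1 i).mul (dG1 i)).add
      (Bdd'.sum fun i => ((d2 i).mul (dw2 i)).mul (dg' i))).add
      (dc.mul (((Bdd'.sum fun i => (d1' i).mul (dw1 i)).add
        (Bdd'.sum fun i => ((d2 i).mul (dG2 i)).mul (dg i))).add
        (dc.mul (Bdd'.sum fun i => ((d2' i).mul (dw2 i)).mul (dg i)))))
  obtain ⟨C₁, hC₁, hCR⟩ := bdd_all (m := 1) (u := fun _ j => _) (fun _ j => hR j)
  obtain ⟨C₀, hC₀, hCφ⟩ := bdd_all (fun i j => bdd_cs (c0' i j) (pd_cs (hφ0 i).2.1 j))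
  have hLS : ∀ e x ω y, enorm2 (Lfun φ0 χ φ1 w1 G1 φ2 w2 G2 g2 e x ω y) ≤
      (N * (C₀ + C₁)) * (1 + ∑ i, |χ i ω|) := by
    intro e x ω y
    rw [mul_assoc]
    apply enorm2_le
    intro j
    have hs0 : 0 ≤ ∑ i, |χ i ω| := Finset.sum_nonneg fun i _ => abs_nonneg _
    have b1 : |∑ i, fderiv ℝ (φ0 i) x (Pi.single j 1) * χ i ω| ≤ C₀ * ∑ i, |χ i ω| := by
      rw [Finset.mul_sum]
      refine (Finset.abs_sum_le_sum_abs _ _).trans (Finset.sum_le_sum fun i _ => ?_)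
      rw [abs_mul]
      exact mul_le_mul_of_nonneg_right (hCφ i j x) (abs_nonneg _)
    have b2 := hCR 0 j (e, x, ω, y)
    unfold Lfun
    refine (abs_add_le _ _).trans ((add_le_add b1 b2).trans ?_)
    nlinarith [mul_nonneg hC₁ hs0]
  have hS := young_int μ hΦ hΦ2 χ hχmeas hχint (N * (C₀ + C₁)) (by positivity)
  have hLc : ∀ ω, Continuous fun p : ℝ × (Fin N → ℝ) × (Fin N → ℝ) =>
      Lfun φ0 χ φ1 w1 G1 φ2 w2 G2 g2 p.1 p.2.1 ω p.2.2 := by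
    intro ω
    refine continuous_pi fun j => ?_
    have k0' := fun i => (c0' i j).comp
      (continuous_fst.comp (continuous_snd (X := ℝ) (Y := (Fin N → ℝ) × (Fin N → ℝ))))
    have k1' := fun i => (c1' i j).comp
      (continuous_fst.comp (continuous_snd (X := ℝ) (Y := (Fin N → ℝ) × (Fin N → ℝ))))
    have k2' := fun i => (c2' i j).comp
      (continuous_fst.comp (continuous_snd (X := ℝ) (Y := (Fin N → ℝ) × (Fin N → ℝ))))
    have k1 := fun i => (c1 i).comp
      (continuous_fst.comp (continuous_snd (X := ℝ) (Y := (Fin N → ℝ) × (Fin N → ℝ))))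
    have k2 := fun i => (c2 i).comp
      (continuous_fst.comp (continuous_snd (X := ℝ) (Y := (Fin N → ℝ) × (Fin N → ℝ))))
    have kg := fun i => (cg i).comp
      (continuous_snd.comp (continuous_snd (X := ℝ) (Y := (Fin N → ℝ) × (Fin N → ℝ))))
    have kg' := fun i => (cg' i j).comp
      (continuous_snd.comp (continuous_snd (X := ℝ) (Y := (Fin N → ℝ) × (Fin N → ℝ))))
    have kc := clp_cont.comp (continuous_fst (X := ℝ) (Y := (Fin N → ℝ) × (Fin N → ℝ)))
    exact (continuous_finsetSum _ fun i _ => (k0' i).mul continuous_const).add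
      (((continuous_finsetSum _ fun i _ => (k1 i).mul continuous_const).add
      (continuous_finsetSum _ fun i _ => ((k2 i).mul continuous_const).mul (kg' i))).add
      (kc.mul (((continuous_finsetSum _ fun i _ => (k1' i).mul continuous_const).add
        (continuous_finsetSum _ fun i _ => ((k2 i).mul continuous_const).mul (kg i))).add
        (kc.mul (continuous_finsetSum _ fun i _ => ((k2' i).mul continuous_const).mul (kg i))))))
  have hLm : ∀ e x, Measurable fun p : Ω × (Fin N → ℝ) =>
      Lfun φ0 χ φ1 w1 G1 φ2 w2 G2 g2 e x p.1 p.2 := by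
    intro e x
    refine measurable_pi_lambda _ fun j => ?_
    have hfst : Measurable (Prod.fst : Ω × (Fin N → ℝ) → Ω) := measurable_fst
    have hsnd : Measurable (Prod.snd : Ω × (Fin N → ℝ) → (Fin N → ℝ)) := measurable_snd
    have kχ := fun i => (hχmeas i).comp hfst
    have kw1 := fun i => (hw1 i).1.comp hfst
    have kw2 := fun i => (hw2 i).1.comp hfst
    have kG1 := fun i => ((measurable_pi_apply j).comp (hw1 i).2.2.1).comp
      hfst
    have kG2 := fun i => ((measurable_pi_apply j).comp (hw2 i).2.2.1).comp
      hfst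
    have kg := fun i => (cg i).measurable.comp hsnd
    have kg' := fun i => (cg' i j).measurable.comp hsnd
    exact (Finset.measurable_fun_sum _ fun i _ => measurable_const.mul (kχ i)).add
      (((Finset.measurable_fun_sum _ fun i _ => measurable_const.mul (kG1 i)).add
      (Finset.measurable_fun_sum _ fun i _ => (measurable_const.mul (kw2 i)).mul (kg' i))).add
      (measurable_const.mul (((Finset.measurable_fun_sum _ fun i _ =>
        measurable_const.mul (kw1 i)).add
        (Finset.measurable_fun_sum _ fun i _ => (measurable_const.mul (kG2 i)).mul (kg i))).add
        (measurable_const.mul (Finset.measurable_fun_sum _ fun i _ =>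
          (measurable_const.mul (kw2 i)).mul (kg i))))))
  have hLp : ∀ e x ω y (k : Fin N → ℤ),
      Lfun φ0 χ φ1 w1 G1 φ2 w2 G2 g2 e x ω (y + fun i => (k i : ℝ)) =
        Lfun φ0 χ φ1 w1 G1 φ2 w2 G2 g2 e x ω y := by
    intro e x ω y k
    ext j
    have p1 : ∀ i, g2 i (y + fun i => (k i : ℝ)) = g2 i y := fun i => (hg2 i).2 y k
    have p2 : ∀ i, fderiv ℝ (g2 i) (y + fun i => (k i : ℝ)) (Pi.single j 1) =
      fderiv ℝ (g2 i) y (Pi.single j 1) := fun i => pd_per (hg2 i).2 j y k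
    simp only [Lfun, p1, p2]
  obtain ⟨hme, hten⟩ := energy μ Φ hΦ Q hQo.measurableSet hQb.measure_lt_top f hfmeas hfcont c₁ c₂
    hc₁ hc₂ hH3 hH4 (Lfun φ0 χ φ1 w1 G1 φ2 w2 G2 g2) hLc hLm hLp _ hS hLS
  have hL0 : ∀ x ω y, Lfun φ0 χ φ1 w1 G1 φ2 w2 G2 g2 0 x ω y =
      (fun j => (∑ i, fderiv ℝ (φ0 i) x (Pi.single j 1) * χ i ω) +
              (∑ i, φ1 i x * G1 i ω j) +
              (∑ i, φ2 i x * w2 i ω * fderiv ℝ (g2 i) y (Pi.single j 1))) := by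
    intro x ω y
    ext j
    have : clp 0 = 0 := by simp [clp]
    simp only [Lfun, this, zero_mul, add_zero, add_assoc]
  simp only [hL0] at hten
  refine hten.congr' ?_
  filter_upwards [Ioo_mem_nhdsGT (zero_lt_one : (0:ℝ) < 1)] with ε hε
  refine integral_congr_ae (Eventually.of_forall fun x => ?_)
  have hmp := hT.2.2.1 (ε⁻¹ • x)
  have e1 : ∫ ω, f x ω ((ε ^ 2)⁻¹ • x)
      (Lfun φ0 χ φ1 w1 G1 φ2 w2 G2 g2 ε x ω ((ε ^ 2)⁻¹ • x)) ∂μ =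
      ∫ ω, f x (T (ε⁻¹ • x) ω) ((ε ^ 2)⁻¹ • x)
      (Lfun φ0 χ φ1 w1 G1 φ2 w2 G2 g2 ε x (T (ε⁻¹ • x) ω) ((ε ^ 2)⁻¹ • x)) ∂μ := by
    have hm := hme ε x ((ε ^ 2)⁻¹ • x)
    rw [← hmp.map_eq] at hm
    have := integral_map hmp.measurable.aemeasurable hm
    rw [hmp.map_eq] at this
    exact this
  simp only
  rw [e1]
  refine integral_congr_ae ?_
  filter_upwards [hgrad, ae_all_iff.2 fun i => hχinv i (ε⁻¹ • x)] with ω h1 h2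
  rw [grad_phi T φ0 χ φ1 w1 G1 φ2 w2 G2 g2
    (fun i => (hφ0 i).1.differentiable (by simp)) (fun i => (hφ1 i).1.differentiable (by simp))
    (fun i => (hφ2 i).1.differentiable (by simp)) (fun i => (hg2 i).1.differentiable (by simp))
    ω h1.1 h1.2 ε hε.1 hε.2 x h2]
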